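/- Fix integers n ≥ 2 and k ≥ 3, and set γ_k := 1/2 − 1/k and μ_k := k/2 − 1. For any A₅ > 0 there exist a function ζ̃ : (1,∞) → ℝ and constants A₆ and B₅ > 0, depending only on n, k, A₅, such that the functions z̃_±(u,τ) := A₅ e^{−2γ_k τ}(u² − 1)^{1+2γ_k} u^{−2} ± A₆ e^{−4γ_k τ} ζ̃(u) satisfy D_u[z̃₊] ≥ 0 (supersolution) and D_u[z̃₋] ≤ 0 (subsolution) at every point of the region 1 + B₅ e^{−μ_k τ} ≤ u ≤ B₅^{−1} e^{τ/2}. -/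

import Mathlib

open Topology Filter Asymptotics Set

/-- `γ_k = 1/2 - 1/k`. -/
noncomputable def gam (k : ℕ) : ℝ := 1/2 - 1/(k:ℝ)

/-- `μ_k = k/2 - 1`. -/
noncomputable def mu (k : ℕ) : ℝ := (k:ℝ)/2 - 1

/-- The quadratic operator `Q_u[Z] = Z Z'' - (1/2)(Z')² - Z Z'/u - 2(n-1)Z²/u²`. -/
noncomputable def Qop (n : ℕ) (Z : ℝ → ℝ) (u : ℝ) : ℝ :=
  Z u * deriv (deriv Z) u - (1/2) * (deriv Z u)^2
    - Z u * deriv Z u / u - 2 * ((n:ℝ) - 1) * (Z u)^2 / u^2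

/-- The parabolic operator
`D_u[z] = z_τ - (1/2)(u⁻¹ - u) z_u - u⁻² z - Q_u[z]/(2(n-1))`. -/
noncomputable def Dop (n : ℕ) (z : ℝ → ℝ → ℝ) (u τ : ℝ) : ℝ :=
  deriv (z u) τ - (1/2) * (u⁻¹ - u) * deriv (fun x => z x τ) u
    - z u τ / u^2 - Qop n (fun x => z x τ) u / (2 * ((n:ℝ) - 1))

/-!
Write `D_u = L - Q_u / (2(n-1))` with `L` linear. Every `e^{cτ} (u² - 1)^p u⁻²` is an eigenfunction
of `L` with eigenvalue `c + p - 1`. The leading term `c = -2γ`, `p = 1 + 2γ` has eigenvalue `0`, so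
its only error is quadratic, of order `e^{-4γτ} (u² - 1)^{4γ} u⁻²`. The correction `c = -4γ`,
`p = 4γ` has exactly this size and eigenvalue `-1`, so a large multiple of it, with either sign,
absorbs the error as long as the correction stays below the leading term. That condition,
`const * e^{-2γτ} ≤ (u² - 1)^{1-2γ}`, holds for `u - 1 ≥ B e^{-μτ}` with `μ = 2γ / (1 - 2γ)`.
-/

section LinearPart

lemma hasDerivAt_const_mul_exp (a c t : ℝ) :
    HasDerivAt (fun t => a * Real.exp (c * t)) (c * (a * Real.exp (c * t))) t :=
  ((hasDerivAt_const_mul c).exp.const_mul a).congr_deriv (by ring)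

/-- The linear part `z_τ - (1/2)(u⁻¹ - u) z_u - u⁻² z` of the operator `D_u`. -/
noncomputable def linOp (z : ℝ → ℝ → ℝ) (u τ : ℝ) : ℝ :=
  deriv (z u) τ - 1 / 2 * (u⁻¹ - u) * deriv (fun x => z x τ) u - z u τ / u ^ 2

lemma Dop_eq_linOp_sub (n : ℕ) (z : ℝ → ℝ → ℝ) (u τ : ℝ) :
    Dop n z u τ = linOp z u τ - Qop n (fun x => z x τ) u / (2 * ((n : ℝ) - 1)) := by
  simp only [Dop, linOp]

lemma linOp_add {z w : ℝ → ℝ → ℝ} {u τ : ℝ}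
    (hzτ : DifferentiableAt ℝ (z u) τ) (hzu : DifferentiableAt ℝ (fun x => z x τ) u)
    (hwτ : DifferentiableAt ℝ (w u) τ) (hwu : DifferentiableAt ℝ (fun x => w x τ) u) :
    linOp (fun x t => z x t + w x t) u τ = linOp z u τ + linOp w u τ := by
  simp only [linOp, deriv_fun_add hzτ hwτ, deriv_fun_add hzu hwu]
  ring

end LinearPart

section OuterProfile

/-- The spatial profile `(x² - 1)^p x⁻²`. The factor `x⁻²` makes `e^{cτ} (x² - 1)^p x⁻²` an
eigenfunction of the linear part of `D_u` for all exponents `p` and `c`. -/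
noncomputable def outerProfile (p x : ℝ) : ℝ := (x ^ 2 - 1) ^ p / x ^ 2

variable {p x : ℝ}

lemma sq_sub_one_pos (hx : 1 < x) : 0 < x ^ 2 - 1 := by nlinarith

lemma sq_sub_one_div_sq_le_one (x : ℝ) : (x ^ 2 - 1) / x ^ 2 ≤ 1 :=
  div_le_one_of_le₀ (sub_le_self _ zero_le_one) (sq_nonneg x)

lemma contDiffAt_outerProfile {m : WithTop ℕ∞} (hx : 1 < x) :
    ContDiffAt ℝ m (outerProfile p) x :=
  ((contDiffAt_id.pow 2).sub contDiffAt_const).rpow_const_of_ne (sq_sub_one_pos hx).ne'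
    |>.div (contDiffAt_id.pow 2) (by positivity)

lemma hasDerivAt_outerProfile (hx : 1 < x) :
    HasDerivAt (outerProfile p) (2 * (p * x / (x ^ 2 - 1) - 1 / x) * outerProfile p x) x := by
  have hs := sq_sub_one_pos hx
  have hpow : HasDerivAt (fun y : ℝ => y ^ 2) (2 * x) x := by simpa using hasDerivAt_pow 2 x
  refine (((hpow.sub_const 1).rpow_const (p := p) (Or.inl hs.ne')).div hpow
    (by positivity)).congr_deriv ?_
  rw [Real.rpow_sub_one hs.ne', outerProfile]
  field_simp

lemma deriv_outerProfile (hx : 1 < x) :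
    deriv (outerProfile p) x =
      2 * (p - (x ^ 2 - 1) / x ^ 2) * ((x ^ 2 - 1) ^ p / (x * (x ^ 2 - 1))) := by
  have hs := sq_sub_one_pos hx
  rw [(hasDerivAt_outerProfile hx).deriv, outerProfile]
  field_simp

lemma deriv_deriv_outerProfile (hx : 1 < x) :
    deriv (deriv (outerProfile p)) x =
      (4 * p * (p - 1) - 6 * p * ((x ^ 2 - 1) / x ^ 2) + 6 * ((x ^ 2 - 1) / x ^ 2) ^ 2) *
        ((x ^ 2 - 1) ^ p / (x ^ 2 - 1) ^ 2) := by
  have hs := sq_sub_one_pos hx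
  have hx0 : x ≠ 0 := by positivity
  have hderiv : deriv (outerProfile p) =ᶠ[𝓝 x]
      fun y => 2 * (p * y / (y ^ 2 - 1) - 1 / y) * outerProfile p y := by
    filter_upwards [lt_mem_nhds hx] with y hy using (hasDerivAt_outerProfile hy).deriv
  have hpow : HasDerivAt (fun y : ℝ => y ^ 2 - 1) (2 * x) x := by
    simpa using (hasDerivAt_pow 2 x).sub_const 1
  have hfactor : HasDerivAt (fun y => 2 * (p * y / (y ^ 2 - 1) - 1 / y)) _ x :=
    ((((hasDerivAt_id' x).const_mul p).div hpow hs.ne').sub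
      ((hasDerivAt_const x 1).div (hasDerivAt_id' x) hx0)).const_mul 2
  rw [hderiv.deriv_eq]
  refine (hfactor.mul (hasDerivAt_outerProfile hx)).deriv.trans ?_
  simp only [outerProfile]
  field_simp
  ring

lemma linOp_exp_mul_outerProfile (a c p τ : ℝ) {u : ℝ} (hu : 1 < u) :
    linOp (fun x t => a * Real.exp (c * t) * outerProfile p x) u τ =
      (c + p - 1) * (a * Real.exp (c * τ) * outerProfile p u) := by
  have hs := sq_sub_one_pos hu
  simp only [linOp, ((hasDerivAt_const_mul_exp a c τ).mul_const (outerProfile p u)).deriv,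
    ((hasDerivAt_outerProfile hu).const_mul (a * Real.exp (c * τ))).deriv]
  field_simp
  ring

end OuterProfile

section WeightedBound

/-- `WeightedC2Bound f x M` says that `f` is `C²` at `x` and that the values at `x` of `f` and its
first two derivatives are bounded by `M / x²`, `M / (x (x² - 1))` and `M / (x² - 1)²`. With `M` a
multiple of `(x² - 1)^p`, these are the sizes of `outerProfile p` and its derivatives, both near
`x = 1` and near infinity. -/
structure WeightedC2Bound (f : ℝ → ℝ) (x M : ℝ) : Prop where
  contDiffAt : ContDiffAt ℝ 2 f x
  abs_apply_le : |f x| ≤ M / x ^ 2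
  abs_deriv_le : |deriv f x| ≤ M / (x * (x ^ 2 - 1))
  abs_deriv_deriv_le : |deriv (deriv f) x| ≤ M / (x ^ 2 - 1) ^ 2

namespace WeightedC2Bound

variable {f g : ℝ → ℝ} {x M M' : ℝ}

lemma mono (h : WeightedC2Bound f x M) (hx : 1 < x) (hM : M ≤ M') : WeightedC2Bound f x M' where
  contDiffAt := h.contDiffAt
  abs_apply_le := h.abs_apply_le.trans (by gcongr)
  abs_deriv_le := h.abs_deriv_le.trans (by have := sq_sub_one_pos hx; gcongr)
  abs_deriv_deriv_le := h.abs_deriv_deriv_le.trans (by gcongr)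

lemma const_mul (h : WeightedC2Bound f x M) (c : ℝ) :
    WeightedC2Bound (fun y => c * f y) x (|c| * M) where
  contDiffAt := contDiffAt_const.mul h.contDiffAt
  abs_apply_le := by
    rw [abs_mul, mul_div_assoc]
    gcongr
    exact h.abs_apply_le
  abs_deriv_le := by
    rw [deriv_const_mul_field', abs_mul, mul_div_assoc]
    gcongr
    exact h.abs_deriv_le
  abs_deriv_deriv_le := by
    rw [deriv_const_mul_field', deriv_const_mul_field, abs_mul, mul_div_assoc]
    gcongr
    exact h.abs_deriv_deriv_le

lemma add (hf : WeightedC2Bound f x M) (hg : WeightedC2Bound g x M') :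
    WeightedC2Bound (fun y => f y + g y) x (M + M') where
  contDiffAt := hf.contDiffAt.add hg.contDiffAt
  abs_apply_le := by
    rw [add_div]
    exact (abs_add_le _ _).trans (add_le_add hf.abs_apply_le hg.abs_apply_le)
  abs_deriv_le := by
    rw [deriv_fun_add (hf.contDiffAt.differentiableAt two_ne_zero)
      (hg.contDiffAt.differentiableAt two_ne_zero), add_div]
    exact (abs_add_le _ _).trans (add_le_add hf.abs_deriv_le hg.abs_deriv_le)
  abs_deriv_deriv_le := by
    have hadd := iteratedDeriv_fun_add hf.contDiffAt hg.contDiffAt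
    simp only [iteratedDeriv_succ, iteratedDeriv_zero] at hadd
    rw [hadd, add_div]
    exact (abs_add_le _ _).trans (add_le_add hf.abs_deriv_deriv_le hg.abs_deriv_deriv_le)

lemma abs_div_self_le (hx : 1 < x) (h : WeightedC2Bound f x M) :
    |f x / x| ≤ M / (x * (x ^ 2 - 1)) := by
  have hs := sq_sub_one_pos hx
  have hW : 0 ≤ M / (x * (x ^ 2 - 1)) := (abs_nonneg _).trans h.abs_deriv_le
  calc |f x / x| = |f x| / x := by rw [abs_div, abs_of_pos (zero_lt_one.trans hx)]
    _ ≤ M / x ^ 2 / x := by gcongr; exact h.abs_apply_le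
    _ = M / (x * (x ^ 2 - 1)) * ((x ^ 2 - 1) / x ^ 2) := by field_simp
    _ ≤ M / (x * (x ^ 2 - 1)) :=
      mul_le_of_le_one_right hW (sq_sub_one_div_sq_le_one x)

lemma abs_mul_deriv_deriv_le (hx : 1 < x) (h : WeightedC2Bound f x M) :
    |f x * deriv (deriv f) x| ≤ (M / (x * (x ^ 2 - 1))) ^ 2 := by
  have hs := sq_sub_one_pos hx
  calc |f x * deriv (deriv f) x| ≤ M / x ^ 2 * (M / (x ^ 2 - 1) ^ 2) := by
        rw [abs_mul]
        exact mul_le_mul h.abs_apply_le h.abs_deriv_deriv_le (abs_nonneg _)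
          ((abs_nonneg _).trans h.abs_apply_le)
    _ = (M / (x * (x ^ 2 - 1))) ^ 2 := by field_simp

lemma abs_Qop_le {n : ℕ} (hn : 1 ≤ n) (hx : 1 < x) (h : WeightedC2Bound f x M) :
    |Qop n f x| ≤ (5 / 2 + 2 * ((n : ℝ) - 1)) * (M / (x * (x ^ 2 - 1))) ^ 2 := by
  have hn' : (1 : ℝ) ≤ n := by exact_mod_cast hn
  have hQ : Qop n f x = f x * deriv (deriv f) x - 1 / 2 * deriv f x ^ 2
      - f x / x * deriv f x - 2 * ((n : ℝ) - 1) * (f x / x) ^ 2 := by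
    rw [Qop]; ring
  have hzeroth := abs_div_self_le hx h
  have hfirst := h.abs_deriv_le
  have hsecond := abs_mul_deriv_deriv_le hx h
  generalize M / (x * (x ^ 2 - 1)) = W at *
  have hW : 0 ≤ W := (abs_nonneg _).trans hfirst
  have hmixed : |f x / x * deriv f x| ≤ W ^ 2 := by
    rw [abs_mul, sq]
    exact mul_le_mul hzeroth hfirst (abs_nonneg _) hW
  have hfirst_sq : deriv f x ^ 2 ≤ W ^ 2 := sq_le_sq.2 (hfirst.trans (le_abs_self W))
  have hzeroth_sq : (f x / x) ^ 2 ≤ W ^ 2 := sq_le_sq.2 (hzeroth.trans (le_abs_self W))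
  rw [abs_le] at hsecond hmixed
  rw [hQ, abs_le]
  constructor <;> nlinarith [sq_nonneg (deriv f x), sq_nonneg (f x / x)]

lemma abs_Qop_div_le {n : ℕ} (hn : 2 ≤ n) (hx : 1 < x) (h : WeightedC2Bound f x M) :
    |Qop n f x / (2 * ((n : ℝ) - 1))| ≤ 9 / 4 * (M / (x * (x ^ 2 - 1))) ^ 2 := by
  have hn' : (2 : ℝ) ≤ n := by exact_mod_cast hn
  rw [abs_div, abs_of_pos (by linarith : 0 < 2 * ((n : ℝ) - 1)), div_le_iff₀ (by linarith)]
  nlinarith [abs_Qop_le (one_le_two.trans hn) hx h, sq_nonneg (M / (x * (x ^ 2 - 1)))]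

end WeightedC2Bound

/-- The constant in the weighted `C²` bound for `outerProfile p`. -/
noncomputable def profileConst (p : ℝ) : ℝ := 6 * (|p| + 1) ^ 2

lemma profileConst_pos (p : ℝ) : 0 < profileConst p := by
  unfold profileConst; positivity

lemma weightedC2Bound_outerProfile (p : ℝ) {x : ℝ} (hx : 1 < x) :
    WeightedC2Bound (outerProfile p) x (profileConst p * (x ^ 2 - 1) ^ p) := by
  have hs := sq_sub_one_pos hx
  have hp := abs_nonneg p
  have hratio0 : 0 ≤ (x ^ 2 - 1) / x ^ 2 := by positivity
  have hratio1 := sq_sub_one_div_sq_le_one x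
  refine ⟨contDiffAt_outerProfile hx, ?_, ?_, ?_⟩
  · rw [outerProfile, abs_of_nonneg (by positivity), mul_div_assoc]
    exact le_mul_of_one_le_left (by positivity) (by unfold profileConst; nlinarith)
  · rw [deriv_outerProfile hx, abs_mul, abs_of_nonneg (by positivity : 0 ≤ (x ^ 2 - 1) ^ p / _),
      mul_div_assoc]
    gcongr
    generalize (x ^ 2 - 1) / x ^ 2 = r at *
    rw [profileConst, abs_le]
    constructor <;> nlinarith [neg_abs_le p, le_abs_self p]
  · rw [deriv_deriv_outerProfile hx, abs_mul,
      abs_of_nonneg (by positivity : 0 ≤ (x ^ 2 - 1) ^ p / _), mul_div_assoc]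
    gcongr
    generalize (x ^ 2 - 1) / x ^ 2 = r at *
    have hpr : |p * r| ≤ |p| := by
      rw [abs_mul, abs_of_nonneg hratio0]; exact mul_le_of_le_one_right hp hratio1
    rw [abs_le] at hpr
    rw [profileConst, abs_le]
    constructor <;> nlinarith [neg_abs_le p, le_abs_self p, sq_abs p]

end WeightedBound

section Barrier

/-- The two-term ansatz `a e^{-2γτ} (x² - 1)^{1+2γ} x⁻² + b e^{-4γτ} (x² - 1)^{4γ} x⁻²`. Its first
term is annihilated by the linear part of `D_u`; the exponent `4γ` of the correction is chosen so
that it has the size of `Q_u` of the first term. -/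
noncomputable def barrier (γ a b x t : ℝ) : ℝ :=
  a * Real.exp (-2 * γ * t) * outerProfile (1 + 2 * γ) x
    + b * Real.exp (-4 * γ * t) * outerProfile (4 * γ) x

/-- The ratio between the coefficient of the correction in `barrier` and the square of the leading
coefficient that lets the linear part dominate the quadratic one. -/
noncomputable def barrierConst (γ : ℝ) : ℝ :=
  9 / 4 * (profileConst (1 + 2 * γ) + profileConst (4 * γ)) ^ 2

lemma barrierConst_pos (γ : ℝ) : 0 < barrierConst γ := by
  have := profileConst_pos (1 + 2 * γ)
  have := profileConst_pos (4 * γ)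
  unfold barrierConst
  positivity

variable {γ a b M u τ : ℝ}

lemma linOp_barrier (hu : 1 < u) :
    linOp (barrier γ a b) u τ = -(b * Real.exp (-4 * γ * τ) * outerProfile (4 * γ) u) := by
  have hdiff_exp (a c p : ℝ) :
      DifferentiableAt ℝ (fun t => a * Real.exp (c * t) * outerProfile p u) τ := by fun_prop
  have hdiff_profile (c p : ℝ) : DifferentiableAt ℝ (fun x => c * outerProfile p x) u :=
    (hasDerivAt_outerProfile hu).differentiableAt.const_mul c
  refine (linOp_add (hdiff_exp _ _ _) (hdiff_profile _ _) (hdiff_exp _ _ _)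
    (hdiff_profile _ _)).trans ?_
  rw [linOp_exp_mul_outerProfile _ _ _ _ hu, linOp_exp_mul_outerProfile _ _ _ _ hu]
  ring

lemma exp_neg_four_mul (γ τ : ℝ) : Real.exp (-4 * γ * τ) = Real.exp (-2 * γ * τ) ^ 2 := by
  rw [← Real.exp_nat_mul]
  ring_nf

lemma weightedC2Bound_barrier (hu : 1 < u) (ha : |a| ≤ M)
    (hb : |b| * Real.exp (-2 * γ * τ) ≤ M * (u ^ 2 - 1) ^ (1 - 2 * γ)) :
    WeightedC2Bound (fun x => barrier γ a b x τ) u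
      ((profileConst (1 + 2 * γ) + profileConst (4 * γ)) *
        (M * Real.exp (-2 * γ * τ) * (u ^ 2 - 1) ^ (1 + 2 * γ))) := by
  have hs := sq_sub_one_pos hu
  have hK := profileConst_pos (1 + 2 * γ)
  have hK' := profileConst_pos (4 * γ)
  have hleading : |a * Real.exp (-2 * γ * τ)| * (u ^ 2 - 1) ^ (1 + 2 * γ)
      ≤ M * Real.exp (-2 * γ * τ) * (u ^ 2 - 1) ^ (1 + 2 * γ) := by
    rw [abs_mul, Real.abs_exp]
    gcongr
  have hcorrection : |b * Real.exp (-4 * γ * τ)| * (u ^ 2 - 1) ^ (4 * γ)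
      ≤ M * Real.exp (-2 * γ * τ) * (u ^ 2 - 1) ^ (1 + 2 * γ) := calc
    _ = |b| * Real.exp (-2 * γ * τ) * (Real.exp (-2 * γ * τ) * (u ^ 2 - 1) ^ (4 * γ)) := by
      rw [abs_mul, Real.abs_exp, exp_neg_four_mul]; ring
    _ ≤ M * (u ^ 2 - 1) ^ (1 - 2 * γ) * (Real.exp (-2 * γ * τ) * (u ^ 2 - 1) ^ (4 * γ)) := by
      gcongr
    _ = M * Real.exp (-2 * γ * τ) * (u ^ 2 - 1) ^ (1 + 2 * γ) := by
      rw [show 1 + 2 * γ = 1 - 2 * γ + 4 * γ by ring, Real.rpow_add hs]; ring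
  refine (((weightedC2Bound_outerProfile (1 + 2 * γ) hu).const_mul (a * Real.exp (-2 * γ * τ))).add
    ((weightedC2Bound_outerProfile (4 * γ) hu).const_mul (b * Real.exp (-4 * γ * τ)))).mono hu ?_
  rw [mul_left_comm, mul_left_comm _ (profileConst (4 * γ)), add_mul]
  gcongr

lemma abs_Qop_barrier_div_le {n : ℕ} (hn : 2 ≤ n) (hu : 1 < u) (ha : |a| ≤ M)
    (hb : |b| * Real.exp (-2 * γ * τ) ≤ M * (u ^ 2 - 1) ^ (1 - 2 * γ)) :
    |Qop n (fun x => barrier γ a b x τ) u / (2 * ((n : ℝ) - 1))| ≤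
      barrierConst γ * M ^ 2 * Real.exp (-4 * γ * τ) * outerProfile (4 * γ) u := by
  have hs := sq_sub_one_pos hu
  refine ((weightedC2Bound_barrier hu ha hb).abs_Qop_div_le hn hu).trans_eq ?_
  have hpow : ((u ^ 2 - 1) ^ (1 + 2 * γ)) ^ 2 = (u ^ 2 - 1) ^ (4 * γ) * (u ^ 2 - 1) ^ 2 := by
    rw [← Real.rpow_mul_natCast hs.le, ← Real.rpow_natCast (u ^ 2 - 1) 2, ← Real.rpow_add hs]
    congr 1
    push_cast
    ring
  rw [div_pow, mul_pow, mul_pow _ ((u ^ 2 - 1) ^ (1 + 2 * γ)), hpow, exp_neg_four_mul,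
    barrierConst, outerProfile]
  field_simp

lemma Dop_barrier_nonneg_and_nonpos {n : ℕ} (hn : 2 ≤ n) (hu : 1 < u) (ha : |a| ≤ M)
    (hM : barrierConst γ * M * Real.exp (-2 * γ * τ) ≤ (u ^ 2 - 1) ^ (1 - 2 * γ)) :
    0 ≤ Dop n (barrier γ a (-(barrierConst γ * M ^ 2))) u τ ∧
      Dop n (barrier γ a (barrierConst γ * M ^ 2)) u τ ≤ 0 := by
  have hC := barrierConst_pos γ
  have hb : |barrierConst γ * M ^ 2| * Real.exp (-2 * γ * τ) ≤ M * (u ^ 2 - 1) ^ (1 - 2 * γ) := by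
    rw [abs_of_nonneg (by positivity)]
    linarith [mul_le_mul_of_nonneg_left hM ((abs_nonneg a).trans ha)]
  rw [Dop_eq_linOp_sub, Dop_eq_linOp_sub, linOp_barrier hu, linOp_barrier hu]
  constructor
  · linarith [(abs_le.1 (abs_Qop_barrier_div_le hn hu ha (by rwa [abs_neg]))).2]
  · linarith [(abs_le.1 (abs_Qop_barrier_div_le hn hu ha hb)).1]

end Barrier

lemma rpow_mul_exp_le_sq_sub_one_rpow {γ B u τ : ℝ} (hγ : γ < 1 / 2) (hB : 0 ≤ B)
    (hu : 1 + B * Real.exp (-(2 * γ / (1 - 2 * γ)) * τ) ≤ u) :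
    B ^ (1 - 2 * γ) * Real.exp (-2 * γ * τ) ≤ (u ^ 2 - 1) ^ (1 - 2 * γ) := by
  have hγ' : 0 < 1 - 2 * γ := by linarith
  have hpos : 0 ≤ B * Real.exp (-(2 * γ / (1 - 2 * γ)) * τ) := by positivity
  calc B ^ (1 - 2 * γ) * Real.exp (-2 * γ * τ)
      = (B * Real.exp (-(2 * γ / (1 - 2 * γ)) * τ)) ^ (1 - 2 * γ) := by
        rw [Real.mul_rpow hB (Real.exp_pos _).le, ← Real.exp_mul]
        congr 2
        field_simp
    _ ≤ (u ^ 2 - 1) ^ (1 - 2 * γ) := Real.rpow_le_rpow hpos (by nlinarith) hγ'.le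

theorem stmt9_general (n : ℕ) (hn : 2 ≤ n) {γ : ℝ} (hγ : γ < 1 / 2) (A : ℝ) :
    ∃ (ζ : ℝ → ℝ) (A₆ B : ℝ), 0 < B ∧
      ∀ u τ : ℝ, 1 + B * Real.exp (-(2 * γ / (1 - 2 * γ)) * τ) ≤ u →
        0 ≤ Dop n (fun u' τ' =>
            A * Real.exp (-2 * γ * τ') * (u' ^ 2 - 1) ^ (1 + 2 * γ) * u' ^ (-2 : ℝ)
              + A₆ * Real.exp (-4 * γ * τ') * ζ u') u τ ∧
        Dop n (fun u' τ' =>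
            A * Real.exp (-2 * γ * τ') * (u' ^ 2 - 1) ^ (1 + 2 * γ) * u' ^ (-2 : ℝ)
              - A₆ * Real.exp (-4 * γ * τ') * ζ u') u τ ≤ 0 := by
  have hM : 0 < barrierConst γ * (|A| + 1) := mul_pos (barrierConst_pos γ) (by positivity)
  have hB : 0 < (barrierConst γ * (|A| + 1)) ^ (1 - 2 * γ)⁻¹ := Real.rpow_pos_of_pos hM _
  refine ⟨fun x => -outerProfile (4 * γ) x, barrierConst γ * (|A| + 1) ^ 2, _, hB,
    fun u τ hu => ?_⟩
  have hu1 : 1 < u := lt_of_lt_of_le (lt_add_of_pos_right 1 (by positivity)) hu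
  have hregion := rpow_mul_exp_le_sq_sub_one_rpow hγ hB.le hu
  rw [Real.rpow_inv_rpow hM.le (by linarith)] at hregion
  convert Dop_barrier_nonneg_and_nonpos hn hu1 (le_add_of_nonneg_right zero_le_one) hregion
    using 4 <;>
  · ext x
    simp only [barrier, outerProfile, Real.rpow_neg_ofNat, zpow_neg, zpow_ofNat]
    ring

lemma gam_lt_half {k : ℕ} (hk : k ≠ 0) : gam k < 1 / 2 := by
  have : 0 < 1 / (k : ℝ) := by positivity
  unfold gam
  linarith

lemma mu_eq_two_mul_gam_div {k : ℕ} (hk : k ≠ 0) : mu k = 2 * gam k / (1 - 2 * gam k) := by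
  have hsub : 1 - 2 * gam k = 2 / k := by unfold gam; ring
  rw [hsub, mu, gam]
  field_simp

/-- sub- and supersolutions in the outer region. -/
theorem stmt9 (n k : ℕ) (hn : 2 ≤ n) (hk : 3 ≤ k) (A₅ : ℝ) (hA₅ : 0 < A₅) :
    ∃ (ζt : ℝ → ℝ) (A₆ B₅ : ℝ), 0 < B₅ ∧
      ∀ u τ : ℝ,
        1 + B₅ * Real.exp (-mu k * τ) ≤ u → u ≤ B₅⁻¹ * Real.exp (τ/2) →
        0 ≤ Dop n (fun u' τ' =>
            A₅ * Real.exp (-2 * gam k * τ') * (u'^2 - 1) ^ (1 + 2 * gam k) * u' ^ (-2:ℝ)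
              + A₆ * Real.exp (-4 * gam k * τ') * ζt u') u τ ∧
        Dop n (fun u' τ' =>
            A₅ * Real.exp (-2 * gam k * τ') * (u'^2 - 1) ^ (1 + 2 * gam k) * u' ^ (-2:ℝ)
              - A₆ * Real.exp (-4 * gam k * τ') * ζt u') u τ ≤ 0 := by
  have hk0 : k ≠ 0 := by lia
  obtain ⟨ζ, A₆, B, hB, h⟩ := stmt9_general n hn (gam_lt_half hk0) A₅
  exact ⟨ζ, A₆, B, hB, fun u τ hu _ => h u τ (by rwa [← mu_eq_two_mul_gam_div hk0])⟩
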